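/- arXiv:2601.13855 — 3 statements merged into one kernel-verified Lean document; each statement's English description precedes it below -/
import Mathlib

section
/- Let N₁ : ℝ → ℝ satisfy N₁(G) ≥ 2 for all large G and ∫₂^{N₁(G)} (−P(t)) dt = a·G + O(1) as G → ∞. Let k ≥ 2 be fixed and let g_0, ..., g_k : ℝ → ℝ with g_0(T) = T, each g_r(T) → ∞ as T → ∞, and g_r(T) − g_{r−1}(T) ∼ (1−c)·T/ln T as T → ∞ for r = 1, ..., k. Then the sequence N₁(g_0(T)), ..., N₁(g_k(T)) partitions the integral ∫_{N₁(T)}^{N₁(g_k(T))} (−P(t)) dt into k parts ∫_{N₁(g_{r−1}(T))}^{N₁(g_r(T))} (−P(t)) dt whose sum is the whole integral, and these parts are asymptotically equal: for each r = 1, ..., k−1, ∫_{N₁(g_{r−1}(T))}^{N₁(g_r(T))} (−P(t)) dt ∼ ∫_{N₁(g_r(T))}^{N₁(g_{r+1}(T))} (−P(t)) dt as T → ∞. -/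
open Filter Real Asymptotics MeasureTheory

noncomputable def pichar (t : ℝ) : ℝ := (Nat.primeCounting ⌊t⌋₊ : ℝ)

noncomputable def P (t : ℝ) : ℝ := pichar t - ∫ u in (2:ℝ)..t, 1 / Real.log u

noncomputable def a : ℝ := Real.exp 4.5

noncomputable def c : ℝ := Real.eulerMascheroniConstant

noncomputable def Z (t : ℝ) : ℝ := ‖riemannZeta (1/2 + (t : ℂ) * Complex.I)‖ ^ 2

/-!
Put `Φ G = ∫_2^{N₁ G} (-P)`. Since `Φ G = a G + O(1)`, the `r`-th part
`Φ (g r T) - Φ (g (r - 1) T)` is `a (g r T - g (r - 1) T) + O(1)`. The gaps between the `g r T`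
share the scale `(1 - c) T / ln T`, which tends to infinity because `c < 1` and so absorbs the
bounded error: each part is asymptotic to `a (1 - c) T / ln T`, whatever `r` is.
-/

lemma continuousOn_one_div_log : ContinuousOn (fun u : ℝ => 1 / log u) (Set.Ioi 1) := by
  refine continuousOn_const.div (continuousOn_log.mono fun u hu => ?_) fun u hu => (log_pos hu).ne'
  exact (zero_lt_one.trans hu).ne'

lemma intervalIntegrable_one_div_log {x y : ℝ} (hx : 1 < x) (hy : 1 < y) :
    IntervalIntegrable (fun u => 1 / log u) volume x y :=
  (continuousOn_one_div_log.mono (Set.ordConnected_Ioi.uIcc_subset hx hy)).intervalIntegrable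

lemma continuousOn_integral_one_div_log {x : ℝ} (hx : 1 < x) :
    ContinuousOn (fun t => ∫ u in x..t, 1 / log u) (Set.Ioi 1) := fun t ht =>
  (intervalIntegral.integral_hasDerivAt_right (intervalIntegrable_one_div_log hx ht)
    (continuousOn_one_div_log.stronglyMeasurableAtFilter isOpen_Ioi t ht)
    (continuousOn_one_div_log.continuousAt (Ioi_mem_nhds ht))).continuousAt.continuousWithinAt

lemma monotone_pichar : Monotone pichar := fun _ _ hst =>
  Nat.cast_le.mpr (Nat.monotone_primeCounting (Nat.floor_mono hst))

lemma intervalIntegrable_P {x y : ℝ} (hx : 1 < x) (hy : 1 < y) :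
    IntervalIntegrable P volume x y :=
  monotone_pichar.intervalIntegrable.sub
    ((continuousOn_integral_one_div_log one_lt_two).mono
      (Set.ordConnected_Ioi.uIcc_subset hx hy)).intervalIntegrable

lemma c_lt_one : c < 1 := eulerMascheroniConstant_lt_two_thirds.trans (by norm_num)

lemma one_isLittleO_const_mul_div_log {C : ℝ} (hC : C ≠ 0) :
    (fun _ : ℝ => (1 : ℝ)) =o[atTop] fun x : ℝ => C * x / log x := by
  have hlog : (fun x : ℝ => log x * (log x)⁻¹) =o[atTop] fun x => x * (log x)⁻¹ :=
    isLittleO_log_id_atTop.mul_isBigO (isBigO_refl _ _)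
  refine (hlog.const_mul_right hC).congr' ?_ (.of_eq (by ext x; ring))
  filter_upwards [eventually_gt_atTop 1] with x hx
  exact mul_inv_cancel₀ (log_pos hx).ne'

lemma isEquivalent_sub_comp_of_isBigO_one {ι 𝕜 : Type*} [NormedField 𝕜] {l : Filter ι}
    {L : Filter 𝕜} {Φ : 𝕜 → 𝕜} {α : 𝕜} {u v h : ι → 𝕜} (hα : α ≠ 0)
    (hΦ : (fun x => Φ x - α * x) =O[L] fun _ => (1 : ℝ)) (hh : (fun _ => (1 : ℝ)) =o[l] h)
    (hu : Tendsto u l L) (hv : Tendsto v l L) (huv : (fun i => v i - u i) ~[l] h) :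
    (fun i => Φ (v i) - Φ (u i)) ~[l] fun i => α * h i := by
  have hmain : (fun i => α * (v i - u i)) ~[l] fun i => α * h i := IsEquivalent.refl.mul huv
  have hscale : (fun _ => (1 : ℝ)) =o[l] fun i => α * h i := hh.const_mul_right hα
  have herr : (fun i => (Φ (v i) - α * v i) - (Φ (u i) - α * u i)) =o[l] fun i => α * h i :=
    ((hΦ.comp_tendsto hv).trans_isLittleO hscale).sub ((hΦ.comp_tendsto hu).trans_isLittleO hscale)
  exact (hmain.add_isLittleO herr).congr_left (.of_eq (by ext i; simp only [Pi.add_apply]; ring))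

lemma integral_eq_sum_Icc_integral {E : Type*} [NormedAddCommGroup E] [NormedSpace ℝ E]
    {μ : Measure ℝ} {f : ℝ → E} {x : ℕ → ℝ} {k : ℕ}
    (hf : ∀ r < k, IntervalIntegrable f μ (x r) (x (r + 1))) :
    ∫ t in x 0..x k, f t ∂μ = ∑ r ∈ Finset.Icc 1 k, ∫ t in x (r - 1)..x r, f t ∂μ := by
  rw [← intervalIntegral.sum_integral_adjacent_intervals hf, Finset.range_eq_Ico,
    ← Finset.Ico_add_one_right_eq_Icc, ← Finset.sum_Ico_add' _ 0 k 1]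
  simp only [Nat.add_sub_cancel]

section Partition

variable {ι : Type*} {l : Filter ι} {μ : Measure ℝ} {f : ℝ → ℝ} {b α : ℝ} {N : ℝ → ℝ}

lemma integral_isEquivalent_of_integral_sub_isBigO_one {u v h : ι → ℝ} (hα : α ≠ 0)
    (hf : ∀ᶠ G in atTop, IntervalIntegrable f μ b (N G))
    (hN : (fun G => (∫ t in b..N G, f t ∂μ) - α * G) =O[atTop] fun _ => (1 : ℝ))
    (hh : (fun _ => (1 : ℝ)) =o[l] h) (hu : Tendsto u l atTop) (hv : Tendsto v l atTop)
    (huv : (fun i => v i - u i) ~[l] h) :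
    (fun i => ∫ t in N (u i)..N (v i), f t ∂μ) ~[l] fun i => α * h i := by
  refine (isEquivalent_sub_comp_of_isBigO_one hα hN hh hu hv huv).congr_left ?_
  filter_upwards [hu.eventually hf, hv.eventually hf] with i hui hvi
  exact intervalIntegral.integral_interval_sub_left hvi hui

theorem stmt_5_general {k : ℕ} {g : ℕ → ι → ℝ} {h : ι → ℝ} (hα : α ≠ 0)
    (hf : ∀ᶠ G in atTop, IntervalIntegrable f μ b (N G))
    (hN : (fun G => (∫ t in b..N G, f t ∂μ) - α * G) =O[atTop] fun _ => (1 : ℝ))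
    (hh : (fun _ => (1 : ℝ)) =o[l] h) (hgtop : ∀ r, r ≤ k → Tendsto (g r) l atTop)
    (hdiff : ∀ r, 1 ≤ r → r ≤ k → (fun i => g r i - g (r - 1) i) ~[l] h) :
    (∀ᶠ i in l, (∫ t in N (g 0 i)..N (g k i), f t ∂μ) =
      ∑ r ∈ Finset.Icc 1 k, ∫ t in N (g (r - 1) i)..N (g r i), f t ∂μ) ∧
    (∀ r, 1 ≤ r → r ≤ k - 1 →
      (fun i => ∫ t in N (g (r - 1) i)..N (g r i), f t ∂μ) ~[l]
        (fun i => ∫ t in N (g r i)..N (g (r + 1) i), f t ∂μ)) := by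
  constructor
  · have hint : ∀ᶠ i in l, ∀ r ≤ k, IntervalIntegrable f μ b (N (g r i)) :=
      (eventually_all_finite (Set.finite_Iic k)).mpr fun r hr => (hgtop r hr).eventually hf
    filter_upwards [hint] with i hi
    exact integral_eq_sum_Icc_integral (x := fun r => N (g r i)) fun r hr =>
      (hi r hr.le).symm.trans (hi (r + 1) hr)
  · have hpart : ∀ r, 1 ≤ r → r ≤ k →
        (fun i => ∫ t in N (g (r - 1) i)..N (g r i), f t ∂μ) ~[l] fun i => α * h i :=
      fun r hr hrk => integral_isEquivalent_of_integral_sub_isBigO_one hα hf hN hh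
        (hgtop (r - 1) (by lia)) (hgtop r hrk) (hdiff r hr hrk)
    exact fun r hr hrk => (hpart r hr (by lia)).trans (hpart (r + 1) (by lia) (by lia)).symm

end Partition

/-- Theorem 1: the sequence `N₁(g r T)` partitions the integral
`∫_{N₁ T}^{N₁(g k T)} (-P)` into `k` asymptotically equal parts. -/
theorem stmt_5 (N₁ : ℝ → ℝ)
    (hN2 : ∀ᶠ G in atTop, 2 ≤ N₁ G)
    (hN : (fun G => (∫ t in (2:ℝ)..N₁ G, -P t) - a * G) =O[atTop] (fun _ => (1:ℝ)))
    (k : ℕ) (hk : 2 ≤ k) (g : ℕ → ℝ → ℝ)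
    (hg0 : ∀ T, g 0 T = T)
    (hgtop : ∀ r, r ≤ k → Tendsto (g r) atTop atTop)
    (hdiff : ∀ r, 1 ≤ r → r ≤ k →
      (fun T => g r T - g (r - 1) T) ~[atTop] (fun T => (1 - c) * T / Real.log T)) :
    (∀ᶠ T in atTop,
      (∫ t in N₁ (g 0 T)..N₁ (g k T), -P t) =
        ∑ r ∈ Finset.Icc 1 k, ∫ t in N₁ (g (r - 1) T)..N₁ (g r T), -P t) ∧
    (∀ r, 1 ≤ r → r ≤ k - 1 →
      (fun T => ∫ t in N₁ (g (r - 1) T)..N₁ (g r T), -P t) ~[atTop]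
        (fun T => ∫ t in N₁ (g r T)..N₁ (g (r + 1) T), -P t)) := by
  have hint : ∀ᶠ G in atTop, IntervalIntegrable (fun t => -P t) volume 2 (N₁ G) :=
    hN2.mono fun G hG => (intervalIntegrable_P one_lt_two (one_lt_two.trans_le hG)).neg
  exact stmt_5_general (exp_ne_zero 4.5) hint hN
    (one_isLittleO_const_mul_div_log (sub_pos.mpr c_lt_one).ne') hgtop hdiff
end

section
/- Let N₁ : ℝ → ℝ satisfy N₁(G) ≥ 2 for all large G and ∫₂^{N₁(G)} (−P(t)) dt = a·G + O(1) as G → ∞. Let g : ℝ → ℝ satisfy (i) g(T) − T ∼ (1−c)·T/ln T as T → ∞, and (ii) for every fixed l > 0, ∫_{g(T)}^{g(T+2l)} |ζ(1/2+it)|² dt = (1+o(1))·2l·ln T as T → ∞. Then for every fixed x > 0, lim_{τ→∞} (1/τ)·{ [∫_{N₁(xτ)}^{N₁(g(xτ))} (−P(t)) dt] · [∫_{g(xτ)}^{g(xτ + 1/(a(1−c)))} |ζ(1/2+it)|² dt] } = x. -/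
/-!
Write `F G = ∫ t in 2..N₁ G, -P t = a G + O(1)`. The increment `F (g T) - F T` is
`a (g T - T) + O(1)`, and `g T - T ∼ (1 - c) T / log T` tends to infinity, so the bounded errors are
negligible and the first integral is `∼ a (1 - c) T / log T`. The second integral is
`∼ log T / (a (1 - c))`. In the product both the logarithms and the constants cancel, leaving `∼ T`.
-/

open Filter Real Asymptotics MeasureTheory

lemma isEquivalent_comp_sub_of_isBigO_one {𝕜 : Type*} [NormedField 𝕜] {l : Filter 𝕜}
    {F g r : 𝕜 → 𝕜} {α : 𝕜} (hα : α ≠ 0)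
    (hF : (fun T => F T - α * T) =O[l] (fun _ => (1 : ℝ))) (hg : Tendsto g l l)
    (hgr : (fun T => g T - T) ~[l] r) (hr : Tendsto (fun T => ‖r T‖) l atTop) :
    (fun T => F (g T) - F T) ~[l] (fun T => α * r T) := by
  have main : (fun T => α * (g T - T)) ~[l] (fun T => α * r T) := IsEquivalent.refl.mul hgr
  have error : (fun T => (F (g T) - α * g T) - (F T - α * T)) =o[l] (fun T => α * r T) :=
    ((hF.comp_tendsto hg).sub hF).trans_isLittleO
      ((isLittleO_const_mul_right_iff hα).2 ((isLittleO_one_left_iff ℝ).2 hr))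
  refine (main.add_isLittleO error).congr_left (.of_forall fun T => ?_)
  simp only [Pi.add_apply]
  ring

lemma tendsto_one_div_mul_comp_const_mul {u : ℝ → ℝ} (hu : u ~[atTop] id) {x : ℝ} (hx : 0 < x) :
    Tendsto (fun τ => 1 / τ * u (x * τ)) atTop (nhds x) := by
  have scaled : (fun τ => u (x * τ)) ~[atTop] (fun τ => x * τ) :=
    hu.comp_tendsto (tendsto_id.const_mul_atTop hx)
  refine ((IsEquivalent.refl (u := fun τ : ℝ => 1 / τ)).mul scaled).symm.tendsto_nhds
    (tendsto_const_nhds.congr' ?_)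
  filter_upwards [eventually_ne_atTop 0] with τ hτ
  simp only [Pi.mul_apply]
  field_simp

lemma isLittleO_const_mul_div_log_id (κ : ℝ) :
    (fun T => κ * T / log T) =o[atTop] (id : ℝ → ℝ) := by
  have hlim : Tendsto (fun T => κ / log T) atTop (nhds 0) := tendsto_log_atTop.const_div_atTop κ
  have h := ((isLittleO_one_iff ℝ).2 hlim).mul_isBigO (isBigO_refl (id : ℝ → ℝ) atTop)
  exact h.congr (fun T => div_mul_eq_mul_div κ (log T) T) fun T => one_mul T

lemma tendsto_norm_const_mul_div_log_atTop {κ : ℝ} (hκ : κ ≠ 0) :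
    Tendsto (fun T => ‖κ * T / log T‖) atTop atTop := by
  rw [← isLittleO_one_left_iff ℝ]
  have h := (isBigO_refl (fun T => (log T)⁻¹) atTop).mul_isLittleO
    ((isLittleO_const_mul_right_iff hκ).2 isLittleO_log_id_atTop)
  refine h.congr' ?_ (.of_forall fun T => ?_)
  · filter_upwards [eventually_gt_atTop 1] with T hT
    exact inv_mul_cancel₀ (log_pos hT).ne'
  · exact inv_mul_eq_div (log T) (κ * T)

lemma intervalIntegrable_one_div_log_s7 {s t : ℝ} (hs : 1 < s) (ht : 1 < t) :
    IntervalIntegrable (fun u => 1 / log u) volume s t := by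
  refine ContinuousOn.intervalIntegrable fun u hu => ContinuousAt.continuousWithinAt ?_
  have hu1 : 1 < u := (lt_min hs ht).trans_le hu.1
  exact continuousAt_const.div (continuousAt_log (by positivity)) (log_pos hu1).ne'

lemma intervalIntegrable_P_s7 {t : ℝ} (ht : 1 < t) : IntervalIntegrable P volume 2 t :=
  monotone_pichar.intervalIntegrable.sub
    (intervalIntegral.continuousOn_primitive_interval'
      (intervalIntegrable_one_div_log_s7 one_lt_two ht) Set.left_mem_uIcc).intervalIntegrable

lemma one_sub_c_pos : 0 < 1 - c := by
  have : c < 2 / 3 := eulerMascheroniConstant_lt_two_thirds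
  linarith

lemma tendsto_atTop_of_sub_isLittleO_id {g : ℝ → ℝ}
    (hg : (fun T => g T - T) =o[atTop] (id : ℝ → ℝ)) : Tendsto g atTop atTop :=
  IsEquivalent.tendsto_atTop (IsLittleO.isEquivalent hg).symm tendsto_id

section Increments

variable {f g N : ℝ → ℝ} {t₀ α : ℝ}

lemma isEquivalent_intervalIntegral_comp {r : ℝ → ℝ} (hα : α ≠ 0)
    (hf : ∀ᶠ G in atTop, IntervalIntegrable f volume t₀ (N G))
    (hN : (fun G => (∫ t in t₀..N G, f t) - α * G) =O[atTop] (fun _ => (1 : ℝ)))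
    (hg : Tendsto g atTop atTop) (hgr : (fun T => g T - T) ~[atTop] r)
    (hr : Tendsto (fun T => ‖r T‖) atTop atTop) :
    (fun T => ∫ t in N T..N (g T), f t) ~[atTop] (fun T => α * r T) := by
  refine (isEquivalent_comp_sub_of_isBigO_one hα hN hg hgr hr).congr_left ?_
  filter_upwards [hf, hg.eventually hf] with T hT hgT
  exact intervalIntegral.integral_interval_sub_left hgT hT

theorem stmt_7_general {w : ℝ → ℝ} {κ : ℝ} (hα : α ≠ 0) (hκ : κ ≠ 0)
    (hf : ∀ᶠ G in atTop, IntervalIntegrable f volume t₀ (N G))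
    (hN : (fun G => (∫ t in t₀..N G, f t) - α * G) =O[atTop] (fun _ => (1 : ℝ)))
    (hg : (fun T => g T - T) ~[atTop] (fun T => κ * T / log T))
    (hw : (fun T => ∫ t in g T..g (T + 1 / (α * κ)), w t) ~[atTop]
      (fun T => 1 / (α * κ) * log T))
    {x : ℝ} (hx : 0 < x) :
    Tendsto (fun τ => (1 / τ) *
      ((∫ t in N (x * τ)..N (g (x * τ)), f t) *
        ∫ t in g (x * τ)..g (x * τ + 1 / (α * κ)), w t))
      atTop (nhds x) := by
  have hcancel : (fun T => α * (κ * T / log T) * (1 / (α * κ) * log T)) =ᶠ[atTop] id := by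
    filter_upwards [eventually_gt_atTop 1] with T hT
    have hlog : log T ≠ 0 := (log_pos hT).ne'
    simp only [id]
    field_simp
  have hgtop : Tendsto g atTop atTop :=
    tendsto_atTop_of_sub_isLittleO_id (hg.trans_isLittleO (isLittleO_const_mul_div_log_id κ))
  have hint : (fun T => ∫ t in N T..N (g T), f t) ~[atTop] (fun T => α * (κ * T / log T)) :=
    isEquivalent_intervalIntegral_comp hα hf hN hgtop hg (tendsto_norm_const_mul_div_log_atTop hκ)
  have hprod : (fun T => (∫ t in N T..N (g T), f t) * ∫ t in g T..g (T + 1 / (α * κ)), w t)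
      ~[atTop] id :=
    (hint.mul hw).trans_eventuallyEq hcancel
  exact tendsto_one_div_mul_comp_const_mul hprod hx

end Increments

/-- Theorem 2: the first `Pζ`-functional attains the value `x` for every fixed `x > 0`. -/
theorem stmt_7 (N₁ : ℝ → ℝ)
    (hN2 : ∀ᶠ G in atTop, 2 ≤ N₁ G)
    (hN : (fun G => (∫ t in (2:ℝ)..N₁ G, -P t) - a * G) =O[atTop] (fun _ => (1:ℝ)))
    (g : ℝ → ℝ)
    (hg1 : (fun T => g T - T) ~[atTop] (fun T => (1 - c) * T / Real.log T))
    (hg2 : ∀ l : ℝ, 0 < l →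
      (fun T => ∫ t in g T..g (T + 2 * l), Z t) ~[atTop] (fun T => 2 * l * Real.log T))
    (x : ℝ) (hx : 0 < x) :
    Tendsto (fun τ => (1 / τ) *
      ((∫ t in N₁ (x * τ)..N₁ (g (x * τ)), -P t) *
        ∫ t in g (x * τ)..g (x * τ + 1 / (a * (1 - c))), Z t))
      atTop (nhds x) := by
  have ha : 0 < a := exp_pos _
  have hc := one_sub_c_pos
  have hZ := hg2 (1 / (a * (1 - c)) / 2) (by positivity)
  rw [mul_div_cancel₀ _ two_ne_zero] at hZ
  have hP := hN2.mono fun G hG => (intervalIntegrable_P_s7 (one_lt_two.trans_le hG)).neg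
  exact stmt_7_general ha.ne' hc.ne' hP hN hg1 hZ hx
end

section
/- Let N₁ : ℝ → ℝ satisfy N₁(G) ≥ 2 for all large G and ∫₂^{N₁(G)} (−P(t)) dt = a·G + O(1) as G → ∞. Let g : ℝ → ℝ satisfy g(T) − T ∼ (1−c)·T/ln T as T → ∞, and assume the prime number theorem in the form π(ρ) ∼ ρ/ln ρ as ρ → ∞. Then for every fixed x > 0, lim_{ρ→∞} (1/π(ρ)) · ∫_{N₁(xρ/(a(1−c)))}^{N₁(g(xρ/(a(1−c))))} (−P(t)) dt = x. -/
open Filter Real Asymptotics MeasureTheory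

/-!
Write `H G = ∫₂^{N₁ G} (-P)`, so that `H G = a G + O(1)` and the integral from `N₁ T` to `N₁ (g T)`
is `H (g T) - H T = a (g T - T) + O(1)`. As `g T - T ∼ (1 - c) T / log T` tends to infinity, it
absorbs the error, and the integral is `∼ a (1 - c) T / log T`. Rescaling the variable, `T = κ ρ`,
changes `T / log T` asymptotically only by the factor `κ`, because `log (κ ρ) ∼ log ρ`; division by
`π(ρ) ∼ ρ / log ρ` then leaves `a (1 - c) κ`, which is `x` for `κ = x / (a (1 - c))`.
-/

section Asymptotics

lemma tendsto_div_log_atTop : Tendsto (fun t : ℝ => t / log t) atTop atTop := by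
  have hpos : ∀ᶠ t : ℝ in atTop, log t / t ∈ Set.Ioi 0 := by
    filter_upwards [eventually_gt_atTop 1] with t ht
    exact div_pos (log_pos ht) (by linarith)
  have hzero : Tendsto (fun t : ℝ => log t / t) atTop (nhdsWithin 0 (Set.Ioi 0)) :=
    tendsto_nhdsWithin_iff.2 ⟨isLittleO_log_id_atTop.tendsto_div_nhds_zero, hpos⟩
  exact hzero.inv_tendsto_nhdsGT_zero.congr fun t => inv_div (log t) t

lemma isEquivalent_log_const_mul {κ : ℝ} (hκ : κ ≠ 0) :
    (fun t => log (κ * t)) ~[atTop] log := by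
  refine (IsEquivalent.refl.add_isLittleO (isLittleO_const_log_atTop (c := log κ))).congr_left ?_
  filter_upwards [eventually_ne_atTop 0] with t ht
  rw [Pi.add_apply, log_mul hκ ht, add_comm]

lemma isEquivalent_div_log_const_mul {κ : ℝ} (hκ : κ ≠ 0) :
    (fun t => κ * t / log (κ * t)) ~[atTop] fun t => κ * (t / log t) := by
  simp only [← mul_div_assoc]
  exact IsEquivalent.refl.div (isEquivalent_log_const_mul hκ)

lemma tendsto_comp_const_mul_div_of_isEquivalent_div_log {f p : ℝ → ℝ} {γ κ : ℝ} (hκ : 0 < κ)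
    (hf : f ~[atTop] fun t => γ * (t / log t)) (hp : p ~[atTop] fun t => t / log t) :
    Tendsto (fun t => f (κ * t) / p t) atTop (nhds (γ * κ)) := by
  have hfκ : (fun t => f (κ * t)) ~[atTop] fun t => γ * (κ * (t / log t)) :=
    (hf.comp_tendsto (tendsto_id.const_mul_atTop hκ)).trans
      (IsEquivalent.refl.mul (isEquivalent_div_log_const_mul hκ.ne'))
  refine (hfκ.div hp).symm.tendsto_nhds (tendsto_const_nhds.congr' ?_)
  filter_upwards [tendsto_div_log_atTop.eventually_ne_atTop 0] with t ht
  rw [Pi.div_apply, ← mul_assoc, mul_div_cancel_right₀ _ ht]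

variable {ι : Type*} {l : Filter ι} {u v φ : ι → ℝ}

lemma tendsto_atTop_of_sub_isEquivalent (hv : Tendsto v l atTop) (hφ : Tendsto φ l atTop)
    (huv : (fun i => u i - v i) ~[l] φ) : Tendsto u l atTop :=
  ((huv.symm.tendsto_atTop hφ).atTop_add_atTop hv).congr fun i => sub_add_cancel (u i) (v i)

lemma isEquivalent_comp_sub_comp_of_isBigO_one {H : ℝ → ℝ} {α : ℝ} (hα : α ≠ 0)
    (hH : (fun G => H G - α * G) =O[atTop] fun _ => (1 : ℝ))
    (hv : Tendsto v l atTop) (hφ : Tendsto φ l atTop) (huv : (fun i => u i - v i) ~[l] φ) :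
    (fun i => H (u i) - H (v i)) ~[l] fun i => α * φ i := by
  have hu : Tendsto u l atTop := tendsto_atTop_of_sub_isEquivalent hv hφ huv
  have herror : (fun i => (H (u i) - α * u i) - (H (v i) - α * v i)) =O[l] fun _ => (1 : ℝ) :=
    (hH.comp_tendsto hu).sub (hH.comp_tendsto hv)
  have hone : (fun _ => (1 : ℝ)) =o[l] fun i => α * φ i :=
    ((isLittleO_one_left_iff ℝ).2 (tendsto_norm_atTop_atTop.comp hφ)).const_mul_right hα
  have hmain : (fun i => α * (u i - v i)) ~[l] fun i => α * φ i := IsEquivalent.refl.mul huv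
  refine (hmain.add_isLittleO (herror.trans_isLittleO hone)).congr_left (.of_forall fun i => ?_)
  simp only [Pi.add_apply]
  ring

end Asymptotics

lemma intervalIntegrable_one_div_log_s12 {b d : ℝ} (hb : 1 < b) (hd : 1 < d) :
    IntervalIntegrable (fun t => 1 / log t) volume b d := by
  simp only [one_div]
  exact (differentiableOn_inv_log.continuousOn.mono
    (Set.ordConnected_Ioi.uIcc_subset hb hd)).intervalIntegrable

lemma intervalIntegrable_P_s12 {b : ℝ} (hb : 1 < b) : IntervalIntegrable P volume 2 b :=
  monotone_pichar.intervalIntegrable.sub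
    (intervalIntegral.continuousOn_primitive_interval'
      (intervalIntegrable_one_div_log_s12 one_lt_two hb) Set.left_mem_uIcc).intervalIntegrable

lemma integral_neg_P_sub {b d : ℝ} (hb : 1 < b) (hd : 1 < d) :
    (∫ t in (2 : ℝ)..d, -P t) - ∫ t in (2 : ℝ)..b, -P t = ∫ t in b..d, -P t :=
  intervalIntegral.integral_interval_sub_left
    (intervalIntegrable_P_s12 hd).neg (intervalIntegrable_P_s12 hb).neg

lemma a_pos : 0 < a := exp_pos _

/-- Theorem 5: the second `Pζ`-functional attains the value `x` for every fixed `x > 0`. -/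
theorem stmt_12 (N₁ : ℝ → ℝ)
    (hN2 : ∀ᶠ G in atTop, 2 ≤ N₁ G)
    (hN : (fun G => (∫ t in (2:ℝ)..N₁ G, -P t) - a * G) =O[atTop] (fun _ => (1:ℝ)))
    (g : ℝ → ℝ)
    (hg1 : (fun T => g T - T) ~[atTop] (fun T => (1 - c) * T / Real.log T))
    (hPNT : (fun ρ => pichar ρ) ~[atTop] (fun ρ => ρ / Real.log ρ))
    (x : ℝ) (hx : 0 < x) :
    Tendsto (fun ρ => (1 / pichar ρ) *
      ∫ t in N₁ (x * ρ / (a * (1 - c)))..N₁ (g (x * ρ / (a * (1 - c)))), -P t)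
      atTop (nhds x) := by
  have ha : 0 < a := a_pos
  have hc : 0 < 1 - c := sub_pos.2 c_lt_one
  have hgap : Tendsto (fun T => (1 - c) * T / log T) atTop atTop := by
    simpa only [mul_div_assoc] using tendsto_div_log_atTop.const_mul_atTop hc
  have hg : Tendsto g atTop atTop := tendsto_atTop_of_sub_isEquivalent tendsto_id hgap hg1
  have hintegral : (fun T => ∫ t in N₁ T..N₁ (g T), -P t)
      ~[atTop] fun T => a * (1 - c) * (T / log T) := by
    have hgap_mul (T : ℝ) : a * (1 - c) * (T / log T) = a * ((1 - c) * T / log T) := by ring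
    simp only [hgap_mul]
    refine (isEquivalent_comp_sub_comp_of_isBigO_one ha.ne' hN tendsto_id hgap hg1).congr_left ?_
    filter_upwards [hN2, hg.eventually hN2] with T hT hgT
    exact integral_neg_P_sub (one_lt_two.trans_le hT) (one_lt_two.trans_le hgT)
  have hκ : 0 < x / (a * (1 - c)) := by positivity
  have hlim := tendsto_comp_const_mul_div_of_isEquivalent_div_log hκ hintegral hPNT
  rw [mul_div_cancel₀ x (by positivity)] at hlim
  exact hlim.congr fun ρ => by rw [one_div_mul_eq_div, div_mul_eq_mul_div]
end
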